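/- Let l1, l2, l3 > 0 with l1 + l2 + l3 = 1, set xj = 1 − 2*lj, and suppose (x1, x2, x3) belongs to the Rauzy gasket 𝓡. Then for every τ ∈ [0, 1/2), every point x ∈ ℝ/ℤ whose forward orbit under F = F_τ^{l1,l2,l3} never meets the three points 0, l1, l1+l2 (mod 1) is periodic: F^n(x) = x for some n ≥ 1. -/

import Mathlib

open Set

noncomputable section

local instance : Fact ((0:ℝ) < 1) := ⟨one_pos⟩

/-- Representative in `[0,1)` of a point of the circle `ℝ/ℤ`. -/
def rep (x : AddCircle (1:ℝ)) : ℝ := (AddCircle.equivIco 1 0 x : ℝ)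

/-- Projection `ℝ → ℝ/ℤ`. -/
def toCirc (t : ℝ) : AddCircle (1:ℝ) := (t : AddCircle (1:ℝ))

/-- The fully flipped 3-interval exchange transformation `F_τ^{l1,l2,l3}`
(it depends only on `l1`, `l2`, `τ`, since `l3 = 1 - l1 - l2`). -/
def FF (l1 l2 τ : ℝ) (x : AddCircle (1:ℝ)) : AddCircle (1:ℝ) :=
  if rep x < l1 then toCirc (l1 - rep x + τ)
  else if rep x < l1 + l2 then toCirc (2*l1 + l2 - rep x + τ)
  else toCirc (l1 + l2 + 1 - rep x + τ)

/-- One branch of the Rauzy subtractive algorithm. -/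
def rauzyStepAt (j : Fin 3) (x : Fin 3 → ℝ) : Fin 3 → ℝ :=
  fun i => (if i = j then 2 * x j - 1 else x i) / x j

/-- The Rauzy gasket. -/
def InRauzyGasket (x : Fin 3 → ℝ) : Prop :=
  (∀ i, 0 ≤ x i) ∧ x 0 + x 1 + x 2 = 1 ∧
  ∃ seq : ℕ → (Fin 3 → ℝ), seq 0 = x ∧
    ∀ n, ∃ j, 1/2 < seq n j ∧ seq (n + 1) = rauzyStepAt j (seq n)

/-!
Let `L = ℓ₀ + ℓ₁ + ℓ₂` and `x i = 1 - 2 ℓ i / L`. In terms of the lengths, the Rauzy step at `j`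
says that `ℓ j < L / 4` and subtracts `ℓ j` from the two other lengths. Dynamically this is a
renormalization: let `A` be the `j`-th arc. If `ℓ j < τ`, then inducing the flipped exchange `F` on
the complement of `A ∪ F⁻¹ A`, and collapsing these two arcs, gives the flipped exchange with the
new lengths and with `τ - ℓ j` in place of `τ`. The quantity `L / 2 - τ` is preserved, and it is
positive at the start. An infinite run of subtractions makes `L` tend to `0`, so after finitely many
steps `τ` no longer exceeds the shortest length. Then every orbit has period `2` or `6`, and
periodicity lifts back through the renormalizations because `F` is injective.
-/

section Orbits

variable {α β : Type*} {r : α → α → Prop} {s : β → β → Prop} {u : ℕ → α}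

/-- `u` is an infinite forward orbit of the relation `r`. For the graph of a partially defined map,
these are the orbits that never leave its domain. -/
def IsOrbit (r : α → α → Prop) (u : ℕ → α) : Prop :=
  ∀ n, r (u n) (u (n + 1))

/-- Every infinite forward orbit of `r` returns to its starting point. -/
def AllOrbitsPeriodic (r : α → α → Prop) : Prop :=
  ∀ u, IsOrbit r u → ∃ n, 1 ≤ n ∧ u n = u 0

lemma isOrbit_iterate {f : α → α} {x : α} (h : ∀ n, r (f^[n] x) (f (f^[n] x))) :
    IsOrbit r fun n => f^[n] x :=
  fun n => by simpa only [Function.iterate_succ_apply'] using h n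

lemma IsOrbit.shift (hu : IsOrbit r u) (k : ℕ) : IsOrbit r fun n => u (k + n) :=
  fun n => hu (k + n)

lemma IsOrbit.apply_eq_apply_zero (hr : Relator.LeftUnique r) (hu : IsOrbit r u) {n p : ℕ}
    (h : u (n + p) = u n) : u p = u 0 := by
  induction n with
  | zero => simpa using h
  | succ n ih =>
    refine ih (hr ?_ (hu n))
    rw [← h, Nat.add_right_comm]
    exact hu (n + p)

lemma AllOrbitsPeriodic.of_injective {f : α → β} (hf : Function.Injective f)
    (hrs : ∀ x y, r x y → s (f x) (f y)) (hs : AllOrbitsPeriodic s) : AllOrbitsPeriodic r := by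
  intro u hu
  obtain ⟨n, hn, hper⟩ := hs (f ∘ u) fun n => hrs _ _ (hu n)
  exact ⟨n, hn, hf hper⟩

variable {R : α → β → Prop}

lemma IsOrbit.exists_isOrbit_section (hu : IsOrbit r u)
    (hits : ∀ u, IsOrbit r u → ∃ n v, R (u n) v)
    (returns : ∀ u v, IsOrbit r u → R (u 0) v → ∃ n, 1 ≤ n ∧ ∃ v', R (u n) v' ∧ s v v') :
    ∃ (t : ℕ → ℕ) (v : ℕ → β), StrictMono t ∧ (∀ n, R (u (t n)) (v n)) ∧ IsOrbit s v := by
  obtain ⟨t₀, v₀, h₀⟩ := hits u hu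
  let Visit := {p : ℕ × β // R (u p.1) p.2}
  have exists_next (p : Visit) : ∃ q : Visit, p.1.1 < q.1.1 ∧ s p.1.2 q.1.2 := by
    obtain ⟨⟨t, v⟩, hv⟩ := p
    obtain ⟨n, hn, v', hv', hs⟩ := returns _ v (hu.shift t) hv
    exact ⟨⟨(t + n, v'), hv'⟩, Nat.lt_add_of_pos_right hn, hs⟩
  choose next lt_next step_next using exists_next
  let visit (n : ℕ) : Visit := next^[n] ⟨(t₀, v₀), h₀⟩
  have visit_succ (n : ℕ) : visit (n + 1) = next (visit n) :=
    Function.iterate_succ_apply' next n _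
  refine ⟨fun n => (visit n).1.1, fun n => (visit n).1.2, strictMono_nat_of_lt_succ fun n => ?_,
    fun n => (visit n).2, fun n => ?_⟩
  · exact visit_succ n ▸ lt_next (visit n)
  · change s (visit n).1.2 (visit (n + 1)).1.2
    exact visit_succ n ▸ step_next (visit n)

theorem AllOrbitsPeriodic.of_section (hr : Relator.LeftUnique r) (hR : Relator.LeftUnique R)
    (hits : ∀ u, IsOrbit r u → ∃ n v, R (u n) v)
    (returns : ∀ u v, IsOrbit r u → R (u 0) v → ∃ n, 1 ≤ n ∧ ∃ v', R (u n) v' ∧ s v v')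
    (hs : AllOrbitsPeriodic s) : AllOrbitsPeriodic r := by
  intro u hu
  obtain ⟨t, v, ht, hR_visit, hv⟩ := hu.exists_isOrbit_section hits returns
  obtain ⟨n, hn, hper⟩ := hs v hv
  have ht_lt : t 0 < t n := ht hn
  have hu_eq : u (t n) = u (t 0) := hR (hR_visit n) (hper ▸ hR_visit 0)
  refine ⟨t n - t 0, Nat.sub_pos_of_lt ht_lt, hu.apply_eq_apply_zero hr (n := t 0) ?_⟩
  rwa [Nat.add_sub_cancel' ht_lt.le]

end Orbits

section CircleRel

variable {p q : ℝ} {r : ℝ → ℝ → Prop}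

lemma eq_of_coe_eq_of_abs_sub_lt {s t : ℝ} (h : (s : AddCircle p) = t) (hst : |s - t| < p) :
    s = t := by
  have hp : 0 < p := (abs_nonneg _).trans_lt hst
  obtain ⟨n, hn⟩ := (AddCircle.coe_eq_zero_iff p).1 (sub_eq_zero.2 h)
  change n • p = s - t at hn
  have hn_abs : |n| < 1 := by
    rw [← hn, zsmul_eq_mul, abs_mul, abs_of_pos hp, mul_lt_iff_lt_one_left hp] at hst
    exact_mod_cast hst
  rw [Int.abs_lt_one_iff.1 hn_abs, zero_smul] at hn
  exact sub_eq_zero.1 hn.symm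

lemma coe_eq_coe_of_eq_add_period {s t : ℝ} (h : s = t + p) : (s : AddCircle p) = t := by
  rw [h, AddCircle.coe_add_period]

/-- The relation between the circles `ℝ/pℤ` and `ℝ/qℤ` induced by a relation between
representatives. -/
def CircleRel (p q : ℝ) (r : ℝ → ℝ → Prop) : AddCircle p → AddCircle q → Prop :=
  Relation.Map r (↑) (↑)

lemma circleRel_coe {s t : ℝ} (h : r s t) : CircleRel p q r s t :=
  ⟨s, t, h, rfl, rfl⟩

lemma leftUnique_circleRel (hr : Relator.LeftUnique r)
    (hq : ∀ s t s' t', r s t → r s' t' → |t - t'| < q) : Relator.LeftUnique (CircleRel p q r) := by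
  rintro _ _ _ ⟨s, t, h, rfl, rfl⟩ ⟨s', t', h', rfl, ht⟩
  obtain rfl := eq_of_coe_eq_of_abs_sub_lt ht (hq _ _ _ _ h' h)
  rw [hr h h']

lemma CircleRel.exists_of_coe_left {s : ℝ} {y : AddCircle q} (h : CircleRel p q r s y)
    (hp : ∀ s' t', r s' t' → |s' - s| < p) : ∃ t, r s t ∧ y = t := by
  obtain ⟨s', t, hst, hs, rfl⟩ := h
  obtain rfl := eq_of_coe_eq_of_abs_sub_lt hs (hp _ _ hst)
  exact ⟨t, hst, rfl⟩

end CircleRel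

section FlipStep

variable {L a b τ z : ℝ} {y : AddCircle L}

/-- The graph, on representatives, of the fully flipped exchange of the three arcs `(0, a)`,
`(a, a + b)`, `(a + b, L)`: each arc is reversed in place, then everything is rotated by `τ`. The
endpoints of the arcs are left out of its domain. -/
def FlipRel (L a b τ t w : ℝ) : Prop :=
  (0 < t ∧ t < a ∧ w = a - t + τ) ∨
  (a < t ∧ t < a + b ∧ w = 2 * a + b - t + τ) ∨
  (a + b < t ∧ t < L ∧ w = a + b + L - t + τ)

/-- One step of the fully flipped exchange `FlipRel`, on the circle `ℝ/Lℤ`. -/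
def FlipStep (L a b τ : ℝ) : AddCircle L → AddCircle L → Prop :=
  CircleRel L L (FlipRel L a b τ)

/-- `0 < a < a + b < L` cut the circle `ℝ/Lℤ` into three nondegenerate arcs. -/
structure IsArcPartition (L a b : ℝ) : Prop where
  first_pos : 0 < a
  second_pos : 0 < b
  third_pos : a + b < L

lemma IsArcPartition.rotate (h : IsArcPartition L a b) : IsArcPartition L b (L - a - b) := by
  obtain ⟨ha, hb, hc⟩ := h
  exact ⟨hb, by linarith, by linarith⟩

lemma IsArcPartition.exists_coe_eq (h : IsArcPartition L a b) (x : AddCircle L) :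
    ∃ z ∈ Ico 0 L, ↑z = x := by
  obtain ⟨ha, hb, hc⟩ := h
  have : Fact (0 < L) := ⟨by linarith⟩
  exact AddCircle.eq_coe_Ico x

lemma leftUnique_flipStep (h : IsArcPartition L a b) : Relator.LeftUnique (FlipStep L a b τ) := by
  obtain ⟨ha, hb, hc⟩ := h
  refine leftUnique_circleRel ?_ ?_
  · unfold FlipRel
    grind [Relator.LeftUnique]
  · unfold FlipRel
    intro s t s' t' h h'
    rw [abs_sub_lt_iff]
    grind

lemma FlipStep.exists_flipRel (h : IsArcPartition L a b) (hz0 : 0 ≤ z) (hzL : z ≤ L)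
    (hy : FlipStep L a b τ z y) : ∃ w, FlipRel L a b τ z w ∧ y = w := by
  obtain ⟨ha, hb, hc⟩ := h
  refine hy.exists_of_coe_left fun s t hst => ?_
  rw [abs_sub_lt_iff]
  unfold FlipRel at hst
  grind

lemma FlipStep.of_mem_first (h : IsArcPartition L a b) (hz0 : 0 ≤ z) (hza : z ≤ a)
    (hy : FlipStep L a b τ z y) : 0 < z ∧ z < a ∧ y = ↑(a - z + τ) := by
  obtain ⟨ha, hb, hc⟩ := h
  obtain ⟨w, hw, rfl⟩ := hy.exists_flipRel ⟨ha, hb, hc⟩ hz0 (by linarith)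
  unfold FlipRel at hw
  grind

lemma FlipStep.of_mem_second (h : IsArcPartition L a b) (hza : a ≤ z) (hzb : z ≤ a + b)
    (hy : FlipStep L a b τ z y) : a < z ∧ z < a + b ∧ y = ↑(2 * a + b - z + τ) := by
  obtain ⟨ha, hb, hc⟩ := h
  obtain ⟨w, hw, rfl⟩ := hy.exists_flipRel ⟨ha, hb, hc⟩ (by linarith) (by linarith)
  unfold FlipRel at hw
  grind

lemma FlipStep.of_mem_third (h : IsArcPartition L a b) (hzb : a + b ≤ z) (hzL : z ≤ L)
    (hy : FlipStep L a b τ z y) : a + b < z ∧ z < L ∧ y = ↑(a + b - z + τ) := by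
  obtain ⟨ha, hb, hc⟩ := h
  obtain ⟨w, hw, rfl⟩ := hy.exists_flipRel ⟨ha, hb, hc⟩ (by linarith) hzL
  have hperiod : ((a + b + L - z + τ : ℝ) : AddCircle L) = ↑(a + b - z + τ) :=
    coe_eq_coe_of_eq_add_period (by ring)
  unfold FlipRel at hw
  grind

lemma FlipStep.rotate {x y : AddCircle L} (h : FlipStep L a b τ x y) :
    FlipStep L b (L - a - b) τ (x - a) (y - a) := by
  obtain ⟨t, w, h, rfl, rfl⟩ := h
  rcases h with ⟨h0, ha, rfl⟩ | ⟨ha, hb, rfl⟩ | ⟨hb, hL, rfl⟩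
  · rw [← AddCircle.coe_sub, ← AddCircle.coe_sub, ← AddCircle.coe_add_period L (t - a),
      ← AddCircle.coe_add_period L (a - t + τ - a)]
    exact circleRel_coe <| .inr <| .inr ⟨by linarith, by linarith, by ring⟩
  · exact circleRel_coe <| .inl ⟨by linarith, by linarith, by ring⟩
  · exact circleRel_coe <| .inr <| .inl ⟨by linarith, by linarith, by ring⟩

lemma allOrbitsPeriodic_flipStep_of_rotate (h : AllOrbitsPeriodic (FlipStep L b (L - a - b) τ)) :
    AllOrbitsPeriodic (FlipStep L a b τ) :=
  h.of_injective (sub_left_injective (b := (a : AddCircle L))) fun _ _ => FlipStep.rotate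

end FlipStep
section SmallRotation

variable {L a b τ z : ℝ} {u : ℕ → AddCircle L}

lemma apply_three_of_le_rotation (h : IsArcPartition L a b) (hτa : τ ≤ a) (hτb : τ ≤ b)
    (hτc : τ ≤ L - a - b) (hu : IsOrbit (FlipStep L a b τ) u) (huz : u 0 = z)
    (hz0 : 0 ≤ z) (hzτ : z ≤ τ) : u 3 = ↑(τ - z) := by
  obtain ⟨-, -, h₁⟩ := (huz ▸ hu 0).of_mem_first h hz0 (by linarith)
  obtain ⟨-, -, h₂⟩ := (h₁ ▸ hu 1).of_mem_second h (by linarith) (by linarith)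
  obtain ⟨-, -, h₃⟩ := (h₂ ▸ hu 2).of_mem_third h (by linarith) (by linarith)
  rw [h₃]
  congr 1
  ring

lemma exists_period_of_mem_first (h : IsArcPartition L a b) (hτ : 0 ≤ τ) (hτa : τ ≤ a)
    (hτb : τ ≤ b) (hτc : τ ≤ L - a - b) (hu : IsOrbit (FlipStep L a b τ) u) (huz : u 0 = z)
    (hz0 : 0 ≤ z) (hza : z ≤ a) : ∃ n, 1 ≤ n ∧ u n = u 0 := by
  rcases le_total z τ with hzτ | hτz
  · have h₃ := apply_three_of_le_rotation h hτa hτb hτc hu huz hz0 hzτ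
    have h₆ := apply_three_of_le_rotation h hτa hτb hτc (hu.shift 3) h₃ (by linarith) (by linarith)
    exact ⟨6, by norm_num, by rw [huz, h₆, sub_sub_cancel]⟩
  · obtain ⟨-, -, h₁⟩ := (huz ▸ hu 0).of_mem_first h hz0 hza
    obtain ⟨-, -, h₂⟩ := (h₁ ▸ hu 1).of_mem_first h (by linarith) (by linarith)
    refine ⟨2, one_le_two, ?_⟩
    rw [huz, h₂]
    congr 1
    ring

lemma exists_period_of_mem_second (h : IsArcPartition L a b) (hτ : 0 ≤ τ) (hτa : τ ≤ a)
    (hτb : τ ≤ b) (hτc : τ ≤ L - a - b) (hu : IsOrbit (FlipStep L a b τ) u) (huz : u 0 = z)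
    (hza : a ≤ z) (hzb : z ≤ a + b) : ∃ n, 1 ≤ n ∧ u n = u 0 := by
  have hz : u 0 - a = ↑(z - a) := by rw [huz, AddCircle.coe_sub]
  obtain ⟨n, hn, hper⟩ := exists_period_of_mem_first h.rotate hτ hτb hτc (by linarith)
    (fun n => (hu n).rotate) hz (by linarith) (by linarith)
  exact ⟨n, hn, sub_left_injective hper⟩

lemma exists_period_of_mem_third (h : IsArcPartition L a b) (hτ : 0 ≤ τ) (hτa : τ ≤ a)
    (hτb : τ ≤ b) (hτc : τ ≤ L - a - b) (hu : IsOrbit (FlipStep L a b τ) u) (huz : u 0 = z)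
    (hzb : a + b ≤ z) (hzL : z ≤ L) : ∃ n, 1 ≤ n ∧ u n = u 0 := by
  have hz : u 0 - a = ↑(z - a) := by rw [huz, AddCircle.coe_sub]
  obtain ⟨n, hn, hper⟩ := exists_period_of_mem_second h.rotate hτ hτb hτc (by linarith)
    (fun n => (hu n).rotate) hz (by linarith) (by linarith)
  exact ⟨n, hn, sub_left_injective hper⟩

theorem allOrbitsPeriodic_flipStep_of_rotation_le (h : IsArcPartition L a b) (hτ : 0 ≤ τ)
    (hτa : τ ≤ a) (hτb : τ ≤ b) (hτc : τ ≤ L - a - b) :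
    AllOrbitsPeriodic (FlipStep L a b τ) := by
  intro u hu
  obtain ⟨z, ⟨hz0, hzL⟩, hz⟩ := h.exists_coe_eq (u 0)
  rcases le_total z a with hza | hza
  · exact exists_period_of_mem_first h hτ hτa hτb hτc hu hz.symm hz0 hza
  rcases le_total z (a + b) with hzb | hzb
  · exact exists_period_of_mem_second h hτ hτa hτb hτc hu hz.symm hza hzb
  · exact exists_period_of_mem_third h hτ hτa hτb hτc hu hz.symm hzb hzL.le

end SmallRotation

section Renormalization

variable {L a b τ z : ℝ} {u : ℕ → AddCircle L}

/-- The conditions for renormalizing along the first arc: it is shorter than the two others, and its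
preimage `(b + τ, a + b + τ)` starts inside the third one. -/
structure IsRenormalizable (L a b τ : ℝ) : Prop where
  first_pos : 0 < a
  first_lt_second : a < b
  first_lt_third : a < L - a - b
  first_lt_rotation : a < τ
  rotation_lt : τ < L - b

/-- The renormalization section, on representatives `t`: the complement of the first arc `(0, a)`
and of its preimage `(b + τ, a + b + τ)`, with the coordinate `v` in which both have been collapsed
to a point. If `a + b + τ > L`, the preimage wraps around the first arc, up to `2 a + b + τ - L`. -/
def CollapseRel (L a b τ t v : ℝ) : Prop :=
  (a < t ∧ 2 * a + b + τ - L < t ∧ t < b + τ ∧ v = t - a) ∨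
  (a + b + τ < t ∧ t < L ∧ v = t - 2 * a)

/-- The renormalization section `CollapseRel`, from the circle `ℝ/Lℤ` to the collapsed circle. -/
def Collapse (L a b τ : ℝ) : AddCircle L → AddCircle (L - 2 * a) → Prop :=
  CircleRel L (L - 2 * a) (CollapseRel L a b τ)

lemma IsRenormalizable.isArcPartition (h : IsRenormalizable L a b τ) : IsArcPartition L a b := by
  obtain ⟨ha, hab, hac, -, -⟩ := h
  exact ⟨ha, by linarith, by linarith⟩

lemma leftUnique_collapse (h : IsRenormalizable L a b τ) :
    Relator.LeftUnique (Collapse L a b τ) := by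
  obtain ⟨ha, hab, hac, haτ, -⟩ := h
  refine leftUnique_circleRel ?_ ?_
  · unfold CollapseRel
    grind [Relator.LeftUnique]
  · unfold CollapseRel
    intro s t s' t' h h'
    rw [abs_sub_lt_iff]
    grind

lemma exists_collapse_of_mem_first (h : IsRenormalizable L a b τ)
    (hu : IsOrbit (FlipStep L a b τ) u) (huz : u 0 = z) (hz0 : 0 ≤ z) (hza : z ≤ a) :
    ∃ v, Collapse L a b τ (u 1) v := by
  obtain ⟨-, -, h₁⟩ := (huz ▸ hu 0).of_mem_first h.isArcPartition hz0 hza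
  obtain ⟨-, hab, hac, haτ, -⟩ := h
  rw [h₁]
  exact ⟨_, circleRel_coe <| .inl ⟨by linarith, by linarith, by linarith, rfl⟩⟩

lemma exists_collapse (h : IsRenormalizable L a b τ) (hu : IsOrbit (FlipStep L a b τ) u) :
    ∃ n v, Collapse L a b τ (u n) v := by
  have hL := h.isArcPartition
  obtain ⟨-, hab, -, haτ, hτ⟩ := id h
  obtain ⟨z, ⟨hz0, hzL⟩, hz⟩ := hL.exists_coe_eq (u 0)
  rcases le_or_gt z a with hza | hza
  · exact ⟨1, exists_collapse_of_mem_first h hu hz.symm hz0 hza⟩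
  rcases le_or_gt z (2 * a + b + τ - L) with hz_second | hz_second
  · obtain ⟨-, -, h₁⟩ := (hz ▸ hu 0).of_mem_second hL hza.le (by linarith)
    have h₁' : u 1 = ↑(2 * a + b - z + τ - L) :=
      h₁.trans (coe_eq_coe_of_eq_add_period (by ring))
    exact ⟨2, exists_collapse_of_mem_first h (hu.shift 1) h₁' (by linarith) (by linarith)⟩
  rcases lt_or_ge z (b + τ) with hz_lower | hz_lower
  · exact ⟨0, ↑(z - a), hz ▸ circleRel_coe (.inl ⟨hza, hz_second, hz_lower, rfl⟩)⟩
  rcases le_or_gt z (a + b + τ) with hz_third | hz_upper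
  · obtain ⟨-, -, h₁⟩ := (hz ▸ hu 0).of_mem_third hL (by linarith) hzL.le
    exact ⟨2, exists_collapse_of_mem_first h (hu.shift 1) h₁ (by linarith) (by linarith)⟩
  · exact ⟨0, ↑(z - 2 * a), hz ▸ circleRel_coe (.inr ⟨hz_upper, hzL, rfl⟩)⟩

lemma exists_return_of_lower_second (h : IsRenormalizable L a b τ)
    (hu : IsOrbit (FlipStep L a b τ) u) (huz : u 0 = z)
    (hza : a < z) (hz : 2 * a + b + τ - L < z) (hzb : z ≤ a + b) :
    ∃ n, 1 ≤ n ∧ ∃ v, Collapse L a b τ (u n) v ∧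
      FlipStep (L - 2 * a) a (b - a) (τ - a) ↑(z - a) v := by
  have hL := h.isArcPartition
  obtain ⟨ha, hab, hac, haτ, -⟩ := h
  obtain ⟨-, hzb', h₁⟩ := (huz ▸ hu 0).of_mem_second hL hza.le hzb
  rcases le_or_gt z (2 * a) with hz2a | hz2a
  · obtain ⟨-, -, h₂⟩ := (h₁ ▸ hu 1).of_mem_third hL (by linarith) (by linarith)
    have h₂' : u 2 = ↑(z - a) := by rw [h₂]; congr 1; ring
    obtain ⟨hz_pos, hz_lt, h₃⟩ := (h₂' ▸ hu 2).of_mem_first hL (by linarith) (by linarith)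
    refine ⟨3, by norm_num, ↑(a - (z - a) + τ - a), ?_, ?_⟩
    · rw [h₃]
      exact circleRel_coe <| .inl ⟨by linarith, by linarith, by linarith, rfl⟩
    · exact circleRel_coe <| .inl ⟨hz_pos, hz_lt, by ring⟩
  · refine ⟨1, le_rfl, ↑(2 * a + b - z + τ - a), ?_, ?_⟩
    · rw [h₁]
      exact circleRel_coe <| .inl ⟨by linarith, by linarith, by linarith, rfl⟩
    · exact circleRel_coe <| .inr <| .inl ⟨by linarith, by linarith, by ring⟩

lemma exists_return_of_lower_third (h : IsRenormalizable L a b τ)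
    (hu : IsOrbit (FlipStep L a b τ) u) (huz : u 0 = z) (hzb : a + b ≤ z) (hz : z < b + τ)
    (hzL : z ≤ L) :
    ∃ n, 1 ≤ n ∧ ∃ v, Collapse L a b τ (u n) v ∧
      FlipStep (L - 2 * a) a (b - a) (τ - a) ↑(z - a) v := by
  have hL := h.isArcPartition
  obtain ⟨ha, hab, hac, -, hτ⟩ := h
  obtain ⟨hzb', -, h₁⟩ := (huz ▸ hu 0).of_mem_third hL hzb hzL
  rcases lt_or_ge z (L - a) with hzc | hzc
  · refine ⟨1, le_rfl, ↑(a + b - z + τ - a), ?_, ?_⟩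
    · rw [h₁]
      exact circleRel_coe <| .inl ⟨by linarith, by linarith, by linarith, rfl⟩
    · rw [← AddCircle.coe_add_period _ (a + b - z + τ - a)]
      exact circleRel_coe <| .inr <| .inr ⟨by linarith, by linarith, by ring⟩
  · obtain ⟨-, -, h₂⟩ := (h₁ ▸ hu 1).of_mem_second hL (by linarith) (by linarith)
    have h₂' : u 2 = ↑(z - L + a) := h₂.trans (coe_eq_coe_of_eq_add_period (by ring))
    obtain ⟨hz_pos, hz_lt, h₃⟩ :=
      (h₂' ▸ hu 2).of_mem_first hL (by linarith) (by linarith)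
    refine ⟨3, by norm_num, ↑(a - (z - L + a) + τ - a), ?_, ?_⟩
    · rw [h₃]
      exact circleRel_coe <| .inl ⟨by linarith, by linarith, by linarith, rfl⟩
    · rw [coe_eq_coe_of_eq_add_period (show z - a = z - L + a + (L - 2 * a) by ring)]
      exact circleRel_coe <| .inl ⟨hz_pos, hz_lt, by ring⟩

lemma exists_return_of_upper (h : IsRenormalizable L a b τ)
    (hu : IsOrbit (FlipStep L a b τ) u) (huz : u 0 = z) (hz : a + b + τ < z) (hzL : z < L) :
    ∃ n, 1 ≤ n ∧ ∃ v, Collapse L a b τ (u n) v ∧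
      FlipStep (L - 2 * a) a (b - a) (τ - a) ↑(z - 2 * a) v := by
  have hL := h.isArcPartition
  obtain ⟨ha, -, -, haτ, -⟩ := h
  obtain ⟨-, -, h₁⟩ := (huz ▸ hu 0).of_mem_third hL (by linarith) hzL.le
  refine ⟨1, le_rfl, ↑(a + b - z + τ + L - 2 * a), ?_, ?_⟩
  · rw [h₁, ← AddCircle.coe_add_period]
    exact circleRel_coe <| .inr ⟨by linarith, by linarith, rfl⟩
  · exact circleRel_coe <| .inr <| .inr ⟨by linarith, by linarith, by ring⟩

/- Write `A` for the first arc. A point of the section mapped outside `F⁻¹ A` returns in one step;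
the others follow `F⁻¹ A → A → F A` and return after three. -/
theorem allOrbitsPeriodic_of_renormalize (h : IsRenormalizable L a b τ)
    (hper : AllOrbitsPeriodic (FlipStep (L - 2 * a) a (b - a) (τ - a))) :
    AllOrbitsPeriodic (FlipStep L a b τ) := by
  refine hper.of_section (leftUnique_flipStep h.isArcPartition) (leftUnique_collapse h)
    (fun u => exists_collapse h) ?_
  rintro u _ hu ⟨z, _, ⟨hza, hz, hz_lower, rfl⟩ | ⟨hz_upper, hzL, rfl⟩, huz, rfl⟩
  · rcases le_total z (a + b) with hzb | hzb
    · exact exists_return_of_lower_second h hu huz.symm hza hz hzb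
    · exact exists_return_of_lower_third h hu huz.symm hzb hz_lower
        (by linarith [h.rotation_lt])
  · exact exists_return_of_upper h hu huz.symm hz_upper hzL

end Renormalization
section Lengths

variable {ℓ : Fin 3 → ℝ} {τ : ℝ} {i j : Fin 3}

/-- Every orbit, avoiding the endpoints of the arcs, of the fully flipped exchange of three
consecutive arcs of lengths `ℓ 0`, `ℓ 1`, `ℓ 2` is periodic. -/
def FlipPeriodic (ℓ : Fin 3 → ℝ) (τ : ℝ) : Prop :=
  AllOrbitsPeriodic (FlipStep (∑ i, ℓ i) (ℓ 0) (ℓ 1) τ)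

lemma sum_sub_sub_eq (ℓ : Fin 3 → ℝ) : ∑ i, ℓ i - ℓ 0 - ℓ 1 = ℓ 2 := by
  rw [Fin.sum_univ_three]
  ring

lemma sum_pos_of_pos (h : ∀ i, 0 < ℓ i) : 0 < ∑ i, ℓ i :=
  Finset.sum_pos (fun i _ => h i) Finset.univ_nonempty

lemma flipPeriodic_of_rotate_one (h : FlipPeriodic (fun i => ℓ (i + 1)) τ) :
    FlipPeriodic ℓ τ := by
  refine allOrbitsPeriodic_flipStep_of_rotate ?_
  rw [sum_sub_sub_eq, ← Equiv.sum_comp (Equiv.addRight 1) ℓ]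
  exact h

lemma flipPeriodic_of_rotate (j : Fin 3) (h : FlipPeriodic (fun i => ℓ (i + j)) τ) :
    FlipPeriodic ℓ τ := by
  fin_cases j
  · simpa using h
  · exact flipPeriodic_of_rotate_one h
  · refine flipPeriodic_of_rotate_one (flipPeriodic_of_rotate_one ?_)
    simpa [add_assoc] using h

lemma flipPeriodic_rotate_iff (j : Fin 3) :
    FlipPeriodic (fun i => ℓ (i + j)) τ ↔ FlipPeriodic ℓ τ :=
  ⟨flipPeriodic_of_rotate j, fun h => flipPeriodic_of_rotate (-j) (by simpa using h)⟩

lemma isArcPartition_of_pos (h : ∀ i, 0 < ℓ i) : IsArcPartition (∑ i, ℓ i) (ℓ 0) (ℓ 1) :=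
  ⟨h 0, h 1, by linarith [h 2, sum_sub_sub_eq ℓ]⟩

lemma flipPeriodic_of_rotation_le (hτ : 0 ≤ τ) (hpos : ∀ i, 0 < ℓ i) (hle : ∀ i, τ ≤ ℓ i) :
    FlipPeriodic ℓ τ :=
  allOrbitsPeriodic_flipStep_of_rotation_le (isArcPartition_of_pos hpos) hτ (hle 0) (hle 1)
    (sum_sub_sub_eq ℓ ▸ hle 2)

/-- `ℓ` consists of the side lengths of a triangle, possibly flat. -/
structure IsTriangle (ℓ : Fin 3 → ℝ) : Prop where
  pos : ∀ i, 0 < ℓ i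
  two_mul_le_sum : ∀ i, 2 * ℓ i ≤ ∑ k, ℓ k

/-- A side is short if it is less than a quarter of the perimeter. In a triangle at most
one side is short. -/
def IsShort (j : Fin 3) (ℓ : Fin 3 → ℝ) : Prop :=
  4 * ℓ j < ∑ k, ℓ k

/-- Subtraction of the `j`-th length from the two others, which is the Rauzy step at `j` in terms of
lengths. -/
def subtractAt (j : Fin 3) (ℓ : Fin 3 → ℝ) : Fin 3 → ℝ :=
  fun i => if i = j then ℓ j else ℓ i - ℓ j

lemma subtractAt_self : subtractAt j ℓ j = ℓ j :=
  if_pos rfl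

lemma sum_subtractAt : ∑ i, subtractAt j ℓ i = ∑ i, ℓ i - 2 * ℓ j := by
  simp only [Fin.sum_univ_three, subtractAt]
  fin_cases j <;> simp <;> ring

lemma IsTriangle.sum_lt_of_isShort (h : IsTriangle ℓ) (hj : IsShort j ℓ) (hij : i ≠ j) :
    ∑ k, ℓ k < 4 * ℓ i := by
  obtain ⟨k, hki, hkj⟩ := (by decide : ∀ i j : Fin 3, ∃ k, k ≠ i ∧ k ≠ j) i j
  have hsum : ∑ m, ℓ m = ℓ i + ℓ j + ℓ k := by
    rw [Fin.sum_univ_three]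
    grind
  unfold IsShort at hj
  linarith [h.two_mul_le_sum k]

lemma IsTriangle.lt_of_isShort (h : IsTriangle ℓ) (hj : IsShort j ℓ) (hij : i ≠ j) :
    ℓ j < ℓ i := by
  have := h.sum_lt_of_isShort hj hij
  unfold IsShort at hj
  linarith

lemma isTriangle_subtractAt (h : IsTriangle ℓ) (hj : IsShort j ℓ) :
    IsTriangle (subtractAt j ℓ) where
  pos i := by
    unfold subtractAt
    split_ifs with hij
    · exact h.pos j
    · exact sub_pos.2 (h.lt_of_isShort hj hij)
  two_mul_le_sum i := by
    rw [sum_subtractAt]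
    unfold subtractAt IsShort at *
    split_ifs with hij
    · linarith
    · linarith [h.two_mul_le_sum i]

theorem flipPeriodic_of_subtractAt (h : IsTriangle ℓ) (hj : IsShort j ℓ) (hτj : ℓ j < τ)
    (hτ : 2 * τ < ∑ i, ℓ i) (hper : FlipPeriodic (subtractAt j ℓ) (τ - ℓ j)) :
    FlipPeriodic ℓ τ := by
  rw [← flipPeriodic_rotate_iff j] at hper ⊢
  have hsum : ∑ i, ℓ (i + j) = ∑ i, ℓ i := Equiv.sum_comp (Equiv.addRight j) ℓ
  have hthird := sum_sub_sub_eq fun i => ℓ (i + j)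
  have hsum_sub : ∑ i, subtractAt j ℓ (i + j) = ∑ i, ℓ (i + j) - 2 * ℓ (0 + j) := by
    rw [hsum, zero_add, ← sum_subtractAt]
    exact Equiv.sum_comp (Equiv.addRight j) (subtractAt j ℓ)
  refine allOrbitsPeriodic_of_renormalize ⟨?_, ?_, ?_, ?_, ?_⟩ ?_
  · exact h.pos _
  · exact h.lt_of_isShort (by simpa using hj) (by simp)
  · exact hthird ▸ h.lt_of_isShort (by simpa using hj) (by simp)
  · simpa using hτj
  · linarith [h.two_mul_le_sum (1 + j)]
  · rw [FlipPeriodic, hsum_sub] at hper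
    simpa [subtractAt] using hper

end Lengths

section SubtractiveRun

open Filter Topology

variable {ℓ : ℕ → Fin 3 → ℝ} {j : ℕ → Fin 3}

/-- An infinite sequence of triangles with sides `ℓ n`, in which `j n` is a short side of `ℓ n` and
the next triangle is obtained by subtracting it from the two other sides. -/
structure SubtractiveRun (ℓ : ℕ → Fin 3 → ℝ) (j : ℕ → Fin 3) : Prop where
  isTriangle : ∀ n, IsTriangle (ℓ n)
  isShort : ∀ n, IsShort (j n) (ℓ n)
  succ_eq : ∀ n, ℓ (n + 1) = subtractAt (j n) (ℓ n)

namespace SubtractiveRun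

lemma tail (h : SubtractiveRun ℓ j) : SubtractiveRun (fun n => ℓ (n + 1)) (fun n => j (n + 1)) where
  isTriangle n := h.isTriangle (n + 1)
  isShort n := h.isShort (n + 1)
  succ_eq n := h.succ_eq (n + 1)

lemma sum_succ (h : SubtractiveRun ℓ j) (n : ℕ) :
    ∑ i, ℓ (n + 1) i = ∑ i, ℓ n i - 2 * ℓ n (j n) := by
  rw [h.succ_eq, sum_subtractAt]

lemma antitone_sum (h : SubtractiveRun ℓ j) : Antitone fun n => ∑ i, ℓ n i :=
  antitone_nat_of_succ_le fun n => by linarith [h.sum_succ n, (h.isTriangle n).pos (j n)]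

lemma sum_nonneg (h : SubtractiveRun ℓ j) (n : ℕ) : 0 ≤ ∑ i, ℓ n i :=
  (sum_pos_of_pos (h.isTriangle n).pos).le

lemma apply_succ_eq (h : SubtractiveRun ℓ j) {n : ℕ} (hn : 4 * ℓ n (j n) < ∑ i, ℓ (n + 1) i) :
    ℓ (n + 1) (j (n + 1)) = ℓ n (j n) := by
  have hself : ℓ (n + 1) (j n) = ℓ n (j n) := by rw [h.succ_eq, subtractAt_self]
  by_cases hj : j n = j (n + 1)
  · rw [← hj, hself]
  · have := (h.isTriangle (n + 1)).sum_lt_of_isShort (h.isShort (n + 1)) hj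
    linarith

theorem tendsto_sum_zero (h : SubtractiveRun ℓ j) :
    Tendsto (fun n => ∑ i, ℓ n i) atTop (𝓝 0) := by
  have hbdd : BddBelow (range fun n => ∑ i, ℓ n i) :=
    ⟨0, forall_mem_range.2 h.sum_nonneg⟩
  have hlim := tendsto_atTop_ciInf h.antitone_sum hbdd
  have hshort : Tendsto (fun n => ℓ n (j n)) atTop (𝓝 0) := by
    have := (hlim.sub (hlim.comp (tendsto_add_atTop_nat 1))).div_const 2
    rw [sub_self, zero_div] at this
    refine this.congr fun n => ?_
    simp only [Function.comp_apply, h.sum_succ]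
    ring
  rcases (le_ciInf h.sum_nonneg).eq_or_lt with hzero | hpos
  · rwa [← hzero] at hlim
  -- Once four times the short side is below the limit perimeter, the same side stays short forever.
  obtain ⟨N, hN⟩ := eventually_atTop.1 (hshort.eventually_lt_const (div_pos hpos four_pos))
  have hconst (n : ℕ) (hn : N ≤ n) : ℓ n (j n) = ℓ N (j N) := by
    induction n, hn using Nat.le_induction with
    | base => rfl
    | succ n hn ih =>
      rw [← ih]
      exact h.apply_succ_eq (by linarith [hN n hn, ciInf_le hbdd (n + 1)])
  have hshort_zero : ℓ N (j N) = 0 :=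
    tendsto_nhds_unique (tendsto_const_nhds.congr' (eventually_atTop.2
      ⟨N, fun n hn => (hconst n hn).symm⟩)) hshort
  exact absurd hshort_zero ((h.isTriangle N).pos (j N)).ne'

lemma flipPeriodic_of_sum_lt {τ : ℝ} (h : SubtractiveRun ℓ j) (hτ : 0 ≤ τ) {n : ℕ}
    (hn : ∑ i, ℓ n i < ∑ i, ℓ 0 i - 2 * τ) : FlipPeriodic (ℓ 0) τ := by
  induction n generalizing ℓ j τ with
  | zero => linarith
  | succ n ih =>
    have hτL : 2 * τ < ∑ i, ℓ 0 i := by linarith [h.sum_nonneg (n + 1)]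
    rcases le_or_gt τ (ℓ 0 (j 0)) with hle | hlt
    · refine flipPeriodic_of_rotation_le hτ (h.isTriangle 0).pos fun i => ?_
      rcases eq_or_ne i (j 0) with rfl | hi
      · exact hle
      · exact hle.trans ((h.isTriangle 0).lt_of_isShort (h.isShort 0) hi).le
    · have hsum : ∑ i, ℓ 1 i = ∑ i, ℓ 0 i - 2 * ℓ 0 (j 0) := h.sum_succ 0
      have htail : FlipPeriodic (ℓ 1) (τ - ℓ 0 (j 0)) :=
        ih (ℓ := fun n => ℓ (n + 1)) h.tail (sub_nonneg.2 hlt.le) (by linarith)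
      exact flipPeriodic_of_subtractAt (h.isTriangle 0) (h.isShort 0) hlt hτL (h.succ_eq 0 ▸ htail)

theorem flipPeriodic {τ : ℝ} (h : SubtractiveRun ℓ j) (hτ : 0 ≤ τ)
    (hτL : 2 * τ < ∑ i, ℓ 0 i) : FlipPeriodic (ℓ 0) τ := by
  obtain ⟨n, hn⟩ := (h.tendsto_sum_zero.eventually_lt_const (sub_pos.2 hτL)).exists
  exact h.flipPeriodic_of_sum_lt hτ hn

end SubtractiveRun

end SubtractiveRun

section Gasket

variable {ℓ : Fin 3 → ℝ} {j : Fin 3}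

/-- The point `x i = 1 - 2 ℓ i / L` of the plane `x 0 + x 1 + x 2 = 1` attached to three lengths of
sum `L`. It lies in the simplex exactly when the `ℓ i` satisfy the triangle inequalities, and the
Rauzy step applies to it at `j` exactly when the side `j` is short. -/
def gasketPoint (ℓ : Fin 3 → ℝ) : Fin 3 → ℝ :=
  fun i => 1 - 2 * ℓ i / ∑ k, ℓ k

lemma half_lt_gasketPoint_iff (hℓ : 0 < ∑ k, ℓ k) : 1 / 2 < gasketPoint ℓ j ↔ IsShort j ℓ := by
  rw [gasketPoint, IsShort, lt_sub_comm, div_lt_iff₀ hℓ]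
  constructor <;> intro h <;> linarith

lemma isTriangle_of_gasketPoint_nonneg (hpos : ∀ i, 0 < ℓ i) (hℓ : ∀ i, 0 ≤ gasketPoint ℓ i) :
    IsTriangle ℓ := by
  refine ⟨hpos, fun i => ?_⟩
  have := hℓ i
  rwa [gasketPoint, sub_nonneg, div_le_one (sum_pos_of_pos hpos)] at this

lemma rauzyStepAt_gasketPoint (hℓ : 0 < ∑ k, ℓ k) (hj : IsShort j ℓ) :
    rauzyStepAt j (gasketPoint ℓ) = gasketPoint (subtractAt j ℓ) := by
  have hsum_sub : ∑ k, ℓ k - 2 * ℓ j ≠ 0 := by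
    unfold IsShort at hj
    linarith
  have hj_eq : gasketPoint ℓ j = (∑ k, ℓ k - 2 * ℓ j) / ∑ k, ℓ k := by
    rw [gasketPoint, sub_div, div_self hℓ.ne']
  ext i
  rw [rauzyStepAt, hj_eq, gasketPoint, gasketPoint, sum_subtractAt, subtractAt]
  split_ifs <;> field_simp <;> ring

theorem InRauzyGasket.exists_subtractiveRun (hpos : ∀ i, 0 < ℓ i)
    (hR : InRauzyGasket (gasketPoint ℓ)) :
    ∃ (t : ℕ → Fin 3 → ℝ) (j : ℕ → Fin 3), t 0 = ℓ ∧ SubtractiveRun t j := by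
  obtain ⟨hnonneg, -, x, hx0, hx⟩ := hR
  choose j hj hx_succ using hx
  let t (n : ℕ) : Fin 3 → ℝ := Nat.rec ℓ (fun n => subtractAt (j n)) n
  have isShort_of (n : ℕ) (h : x n = gasketPoint (t n) ∧ IsTriangle (t n)) :
      IsShort (j n) (t n) :=
    half_lt_gasketPoint_iff (sum_pos_of_pos h.2.pos) |>.1 (h.1 ▸ hj n)
  have ht (n : ℕ) : x n = gasketPoint (t n) ∧ IsTriangle (t n) := by
    induction n with
    | zero => exact ⟨hx0, isTriangle_of_gasketPoint_nonneg hpos hnonneg⟩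
    | succ n ih =>
      have hshort := isShort_of n ih
      refine ⟨?_, isTriangle_subtractAt ih.2 hshort⟩
      rw [hx_succ, ih.1]
      exact rauzyStepAt_gasketPoint (sum_pos_of_pos ih.2.pos) hshort
  exact ⟨t, j, rfl, fun n => (ht n).2, fun n => isShort_of n (ht n), fun _ => rfl⟩

end Gasket

section FlippedExchange

variable {l₁ l₂ τ : ℝ} {x : AddCircle (1 : ℝ)}

lemma toCirc_rep (x : AddCircle (1 : ℝ)) : toCirc (rep x) = x :=
  (AddCircle.equivIco 1 0).symm_apply_apply x

lemma rep_nonneg (x : AddCircle (1 : ℝ)) : 0 ≤ rep x :=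
  (AddCircle.equivIco 1 0 x).2.1

lemma rep_lt_one (x : AddCircle (1 : ℝ)) : rep x < 1 := by
  simpa [rep] using (AddCircle.equivIco 1 0 x).2.2

lemma rep_ne_of_ne_toCirc {t : ℝ} (h : x ≠ toCirc t) : rep x ≠ t := by
  rintro rfl
  exact h (toCirc_rep x).symm

lemma flipStep_FF (h₀ : x ≠ toCirc 0) (h₁ : x ≠ toCirc l₁) (h₂ : x ≠ toCirc (l₁ + l₂)) :
    FlipStep 1 l₁ l₂ τ x (FF l₁ l₂ τ x) := by
  have hpos : 0 < rep x := (rep_nonneg x).lt_of_ne' (rep_ne_of_ne_toCirc h₀)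
  unfold FF
  split_ifs with hx₁ hx₂
  · exact ⟨rep x, _, .inl ⟨hpos, hx₁, rfl⟩, toCirc_rep x, rfl⟩
  · have hgt : l₁ < rep x := (not_lt.1 hx₁).lt_of_ne' (rep_ne_of_ne_toCirc h₁)
    exact ⟨rep x, _, .inr <| .inl ⟨hgt, hx₂, rfl⟩, toCirc_rep x, rfl⟩
  · have hgt : l₁ + l₂ < rep x := (not_lt.1 hx₂).lt_of_ne' (rep_ne_of_ne_toCirc h₂)
    exact ⟨rep x, _, .inr <| .inr ⟨hgt, rep_lt_one x, rfl⟩, toCirc_rep x, rfl⟩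

end FlippedExchange

/-- If `(1-2l1, 1-2l2, 1-2l3)` lies in the Rauzy gasket and `0 ≤ τ < 1/2`, then every
point whose forward orbit under `F_τ^{l1,l2,l3}` avoids the three singularities
`0, l1, l1+l2` is periodic. -/
theorem statement12 (l1 l2 l3 τ : ℝ)
    (h1 : 0 < l1) (h2 : 0 < l2) (h3 : 0 < l3) (hsum : l1 + l2 + l3 = 1)
    (hR : InRauzyGasket ![1 - 2*l1, 1 - 2*l2, 1 - 2*l3])
    (hτ0 : 0 ≤ τ) (hτ : τ < 1/2) :
    ∀ x : AddCircle (1:ℝ),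
      (∀ n : ℕ, (FF l1 l2 τ)^[n] x ≠ toCirc 0 ∧ (FF l1 l2 τ)^[n] x ≠ toCirc l1 ∧
        (FF l1 l2 τ)^[n] x ≠ toCirc (l1 + l2)) →
      ∃ n : ℕ, 1 ≤ n ∧ (FF l1 l2 τ)^[n] x = x := by
  have hpos : ∀ i, 0 < ![l1, l2, l3] i := by simp [Fin.forall_fin_succ, h1, h2, h3]
  have hsum_eq : ∑ i, ![l1, l2, l3] i = 1 := by simpa [Fin.sum_univ_three] using hsum
  have hpoint : gasketPoint ![l1, l2, l3] = ![1 - 2*l1, 1 - 2*l2, 1 - 2*l3] := by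
    ext i
    rw [gasketPoint, hsum_eq, div_one]
    fin_cases i <;> rfl
  obtain ⟨ℓ, j, hℓ, hrun⟩ := InRauzyGasket.exists_subtractiveRun hpos (hpoint ▸ hR)
  have hper : FlipPeriodic ![l1, l2, l3] τ :=
    hℓ ▸ hrun.flipPeriodic hτ0 (by rw [hℓ, hsum_eq]; linarith)
  intro x hx
  have horbit : IsOrbit (FlipStep 1 l1 l2 τ) fun n => (FF l1 l2 τ)^[n] x :=
    isOrbit_iterate fun n => flipStep_FF (hx n).1 (hx n).2.1 (hx n).2.2
  rw [FlipPeriodic, hsum_eq] at hper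
  exact hper _ horbit

end
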